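/- For v > 1, the Hausdorff dimension of K_v = {ξ ∈ ℝ : ‖qξ‖ < q^{-v} for infinitely many q ∈ ℕ} is 2/(v+1). -/

import Mathlib

/-!
Write `K` for the set of `v`-approximable numbers (`wellApprox v`).

*Upper bound.* `K ∩ [z, z + 1]` is covered, for every `M`, by the balls of radius `q ^ (-(v + 1))`
about the `O(q)` fractions `p / q` near `[z, z + 1]` with `q ≥ M`. When `s > 2 / (v + 1)` the
series `∑ q * q ^ (-(v + 1) * s)` converges, so its tails, and with them the `s`-dimensional
Hausdorff measure, vanish (`hausdorffMeasure_wellApprox_inter_Icc`).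

*Lower bound.* Let `0 < s < 2 / (v + 1)`. No measure on `K` is constructed. It is shown instead that
any sequence of sets `U i` of diameter at most `r i` with `∑ r i ^ s ≤ 1 / 1024` misses a point of
`K` (`exists_mem_not_mem`), so that `K` has positive `s`-dimensional Hausdorff measure. The point is
found in a nested sequence of intervals, each of which is *good*: every `U i` meeting it is no longer
than the interval, and those meeting it satisfy `∑ r i ^ s ≤ length ^ s / 1024`.

The step from a good interval of length `L` to a good interval of length `l = n ^ (-(v + 1))` about
some `p / q` with `q ≤ n` is an averaging argument (`IsGood.exists_next`). There are at least
`c * L * n ^ 2` fractions in the interval with denominator in `(n / 16, n]`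
(`eventually_exists_rationals`, a consequence of Dirichlet's theorem), and they are
`1 / n ^ 2`-separated. Hence a set `U i` meets `O(r i * n ^ 2 + 1)` of the small intervals about
them; sets with `r i ≤ l` meet only `O(1)`. Charging each small interval for the sets which meet it,
the total charge is at most `O(L ^ s * n ^ (s * (v + 1))) + L * n ^ 2 / 512`, where the first term is
negligible because `s * (v + 1) < 2`. So the average charge is less than `1` for large `n`, and an
interval with charge less than `1` is good.
-/

/-- Distance from a real number to the nearest integer. -/
noncomputable def nint (x : ℝ) : ℝ := |x - round x|

open Filter Topology MeasureTheory Set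

/-! ### Counting fractions in an interval -/

lemma card_le_of_separated (Y : Finset ℝ) {η D : ℝ} (hη : 0 < η) (hD : 0 ≤ D)
    (hsep : ∀ x ∈ Y, ∀ y ∈ Y, x ≠ y → η ≤ |x - y|)
    (hdiam : ∀ x ∈ Y, ∀ y ∈ Y, |x - y| ≤ D) : (Y.card : ℝ) ≤ D / η + 1 := by
  rcases Y.eq_empty_or_nonempty with rfl | hne
  · simp; positivity
  set m := Y.min' hne
  have hm : ∀ x ∈ Y, 0 ≤ (x - m) / η := fun x hx =>
    div_nonneg (sub_nonneg.2 (Y.min'_le x hx)) hη.le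
  have hcard : Y.card ≤ (Finset.range (⌊D / η⌋₊ + 1)).card := by
    refine Finset.card_le_card_of_injOn (fun x => ⌊(x - m) / η⌋₊) ?_ ?_
    · intro x hx
      have h : (x - m) / η ≤ D / η := by
        gcongr
        exact (le_abs_self _).trans (hdiam x hx m (Y.min'_mem hne))
      simpa [Nat.lt_succ_iff] using Nat.floor_le_floor h
    · intro x hx y hy hxy
      by_contra hne'
      have h1 := Nat.floor_le (hm x hx)
      have h2 := Nat.floor_le (hm y hy)
      have h3 := Nat.lt_floor_add_one ((x - m) / η)
      have h4 := Nat.lt_floor_add_one ((y - m) / η)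
      simp only at hxy
      rw [hxy] at h1 h3
      have h5 : |(x - m) / η - (y - m) / η| < 1 := by rw [abs_lt]; constructor <;> linarith
      rw [← sub_div, abs_div, abs_of_pos hη, div_lt_one hη] at h5
      have := hsep x hx y hy hne'
      rw [show x - m - (y - m) = x - y by ring] at h5
      linarith
  rw [Finset.card_range] at hcard
  have := Nat.floor_le (div_nonneg hD hη.le)
  have h2 : (Y.card : ℝ) ≤ ((⌊D / η⌋₊ + 1 : ℕ) : ℝ) := by exact_mod_cast hcard
  push_cast at h2
  linarith

lemma one_div_sq_le_abs_sub {n d e : ℕ} {p r : ℤ} (hd : 0 < d) (he : 0 < e) (hdn : d ≤ n)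
    (hen : e ≤ n) (h : (p : ℝ) / d ≠ (r : ℝ) / e) :
    1 / (n : ℝ) ^ 2 ≤ |(p : ℝ) / d - (r : ℝ) / e| := by
  have hd' : (0 : ℝ) < d := by exact_mod_cast hd
  have he' : (0 : ℝ) < e := by exact_mod_cast he
  have hdn' : (d : ℝ) ≤ n := by exact_mod_cast hdn
  have hen' : (e : ℝ) ≤ n := by exact_mod_cast hen
  rw [div_sub_div _ _ hd'.ne' he'.ne', abs_div, abs_of_pos (mul_pos hd' he')]
  have h0 : p * e - d * r ≠ 0 := by
    intro h0
    apply h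
    rw [div_eq_div_iff hd'.ne' he'.ne']
    have : (p : ℝ) * e - d * r = 0 := by exact_mod_cast h0
    linarith
  have h1 : (1 : ℝ) ≤ |(p : ℝ) * e - d * r| := by exact_mod_cast Int.one_le_abs h0
  have hn : (0:ℝ) < n := hd'.trans_le hdn'
  apply div_le_div₀ (abs_nonneg _) h1 (by positivity)
  nlinarith

/-- For large `n`, the interval `[a, b]` contains at least `(b - a) * n ^ 2 / 128` fractions whose
denominators are comparable to `n`. By Dirichlet's theorem the balls of radius `1 / ((n + 1) * d)`
about the fractions `p / d`, `d ≤ n`, cover the middle half of `[a, b]`. Those with `d ≤ n / 16` have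
total length at most `(b - a) / 4`, so the remaining ones, each of radius at most `16 / n ^ 2`, must
cover the rest. -/
lemma eventually_exists_rationals {a b : ℝ} (hab : a < b) :
    ∀ᶠ n : ℕ in atTop, ∃ X : Finset ℝ,
      (∀ x ∈ X, x ∈ Icc a b ∧ ∃ (d : ℕ) (p : ℤ), n < 16 * d ∧ d ≤ n ∧ x = (p : ℝ) / d) ∧
      (b - a) * (n : ℝ) ^ 2 ≤ 128 * (X.card : ℝ) := by
  set L := b - a with hL
  have hLpos : 0 < L := sub_pos.2 hab
  have ht1 : ∀ᶠ n : ℕ in atTop, (1 : ℝ) / ((n : ℝ) + 1) < L / 4 :=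
    tendsto_one_div_add_atTop_nhds_zero_nat.eventually_lt_const (by positivity)
  have ht2 : ∀ᶠ n : ℕ in atTop, (1 + Real.log n) / (n : ℝ) < L / 16 := by
    have h1 : Tendsto (fun x : ℝ => (1 + Real.log x) / x) atTop (𝓝 0) := by
      have := tendsto_inv_atTop_zero.add
        (Real.isLittleO_log_id_atTop.tendsto_div_nhds_zero)
      simpa [add_div] using this
    exact (h1.comp tendsto_natCast_atTop_atTop).eventually_lt_const (by positivity)
  filter_upwards [ht1, ht2, eventually_ge_atTop 1] with n h1 h2 hn
  have hn0 : (0 : ℝ) < n := by exact_mod_cast hn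
  let P : ℕ → Finset ℤ := fun d => Finset.Icc ⌈a * d⌉ ⌊b * d⌋
  let Dsmall := (Finset.Icc 1 n).filter (fun d => 16 * d ≤ n)
  let Dbig := (Finset.Icc 1 n).filter (fun d => n < 16 * d)
  let X : Finset ℝ := Dbig.biUnion fun d => (P d).image fun p : ℤ => (p : ℝ) / d
  refine ⟨X, ?_, ?_⟩
  · intro x hx
    simp only [X, Finset.mem_biUnion, Finset.mem_image, Dbig, Finset.mem_filter, Finset.mem_Icc,
      P, Int.ceil_le, Int.le_floor] at hx
    obtain ⟨d, ⟨⟨hd1, hdn⟩, hd⟩, p, ⟨hp1, hp2⟩, rfl⟩ := hx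
    have hd0 : (0 : ℝ) < d := by exact_mod_cast hd1
    exact ⟨⟨(le_div_iff₀ hd0).2 hp1, (div_le_iff₀ hd0).2 hp2⟩, d, p, hd, hdn, rfl⟩
  have hcover : Icc (a + L / 4) (b - L / 4) ⊆
      (⋃ d ∈ Dsmall, ⋃ p ∈ P d, Metric.closedBall ((p : ℝ) / d) (1 / ((n + 1) * d))) ∪
      ⋃ x ∈ X, Metric.closedBall x (16 / (n : ℝ) ^ 2) := by
    intro ξ hξ
    obtain ⟨r, hr, hrn⟩ := Real.exists_rat_abs_sub_le_and_den_le ξ hn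
    have hden : (1 : ℝ) ≤ r.den := by exact_mod_cast r.den_pos
    have hle : |ξ - r| ≤ 1 / (n + 1) := hr.trans (by
      apply one_div_le_one_div_of_le (by positivity)
      nlinarith)
    have hle' := abs_le.1 (hle.trans h1.le)
    have hrc : (r : ℝ) = (r.num : ℝ) / r.den := by
      exact_mod_cast (Rat.num_div_den r).symm
    have hP : r.num ∈ P r.den := by
      have hd0 : (0 : ℝ) < r.den := by linarith
      simp only [P, Finset.mem_Icc, Int.ceil_le, Int.le_floor]
      rw [← le_div_iff₀ hd0, ← div_le_iff₀ hd0, ← hrc]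
      constructor <;> linarith [hξ.1, hξ.2]
    by_cases hs : 16 * r.den ≤ n
    · left
      simp only [mem_iUnion]
      refine ⟨r.den, ?_, r.num, hP, ?_⟩
      · simp only [Dsmall, Finset.mem_filter, Finset.mem_Icc]
        exact ⟨⟨r.den_pos, hrn⟩, hs⟩
      · rw [Metric.mem_closedBall, Real.dist_eq, ← hrc]
        exact hr
    · right
      push Not at hs
      simp only [mem_iUnion]
      refine ⟨r, ?_, ?_⟩
      · simp only [X, Finset.mem_biUnion, Finset.mem_image, Dbig, Finset.mem_filter,
          Finset.mem_Icc]
        exact ⟨r.den, ⟨⟨r.den_pos, hrn⟩, hs⟩, r.num, hP, hrc.symm⟩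
      · rw [Metric.mem_closedBall, Real.dist_eq]
        refine hr.trans ?_
        have hs' : (n : ℝ) < 16 * r.den := by exact_mod_cast hs
        rw [div_le_div_iff₀ (by positivity) (by positivity)]
        nlinarith
  have hsmall : volume.real
      (⋃ d ∈ Dsmall, ⋃ p ∈ P d, Metric.closedBall ((p : ℝ) / d) (1 / ((n + 1) * d))) ≤ L / 4 := by
    have hterm : ∀ d ∈ Dsmall, volume.real
        (⋃ p ∈ P d, Metric.closedBall ((p : ℝ) / d) (1 / (((n : ℝ) + 1) * d))) ≤
        2 * L / n + 2 / n * (d : ℝ)⁻¹ := by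
      intro d hd
      simp only [Dsmall, Finset.mem_filter, Finset.mem_Icc] at hd
      have hd0 : (0 : ℝ) < d := by exact_mod_cast hd.1.1
      have hc : ((P d).card : ℝ) ≤ L * d + 1 := by
        simp only [P, Int.card_Icc]
        have hpos : 0 ≤ L * d + 1 := by positivity
        rw [← Int.cast_natCast, Int.toNat_eq_max, Int.cast_max]
        refine max_le ?_ (by simpa using hpos)
        push_cast
        have := Int.floor_le (b * d)
        have := Int.le_ceil (a * d)
        simp only [hL]; linarith
      refine (measureReal_biUnion_finset_le _ _).trans ?_
      have hv : ∀ p : ℤ, volume.real (Metric.closedBall ((p : ℝ) / d) (1 / (((n : ℝ) + 1) * d)))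
          = 2 * (1 / (((n : ℝ) + 1) * d)) := fun p =>
        Real.volume_real_closedBall (by positivity)
      simp only [hv, Finset.sum_const, nsmul_eq_mul]
      calc ((P d).card : ℝ) * (2 * (1 / (((n : ℝ) + 1) * d)))
          ≤ (L * d + 1) * (2 * (1 / ((n : ℝ) * d))) := by
            gcongr; linarith
        _ = 2 * L / n + 2 / n * (d : ℝ)⁻¹ := by field_simp
    refine (measureReal_biUnion_finset_le _ _).trans ((Finset.sum_le_sum hterm).trans ?_)
    rw [Finset.sum_add_distrib, Finset.sum_const, nsmul_eq_mul, ← Finset.mul_sum]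
    have hDc : (Dsmall.card : ℝ) ≤ n / 16 := by
      have : Dsmall ⊆ Finset.Icc 1 (n / 16) := by
        intro d hd
        simp only [Dsmall, Finset.mem_filter, Finset.mem_Icc] at hd ⊢
        omega
      have := Finset.card_le_card this
      rw [Nat.card_Icc] at this
      have h3 : (Dsmall.card : ℝ) ≤ ((n / 16 : ℕ) : ℝ) := by exact_mod_cast (by omega)
      exact h3.trans Nat.cast_div_le
    have hH : ∑ d ∈ Dsmall, (d : ℝ)⁻¹ ≤ 1 + Real.log n := by
      have h3 := harmonic_le_one_add_log n
      rw [harmonic_eq_sum_Icc] at h3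
      push_cast at h3
      refine le_trans ?_ h3
      exact Finset.sum_le_sum_of_subset_of_nonneg (Finset.filter_subset _ _)
        fun _ _ _ => by positivity
    calc (Dsmall.card : ℝ) * (2 * L / n) + 2 / n * ∑ d ∈ Dsmall, (d : ℝ)⁻¹
        ≤ n / 16 * (2 * L / n) + 2 / n * (1 + Real.log n) := by gcongr
      _ = L / 8 + 2 * ((1 + Real.log n) / n) := by field_simp; ring
      _ ≤ L / 4 := by linarith
  have hbig : volume.real (⋃ x ∈ X, Metric.closedBall x (16 / (n : ℝ) ^ 2)) ≤
      X.card * (32 / (n : ℝ) ^ 2) := by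
    refine (measureReal_biUnion_finset_le _ _).trans ?_
    have hv : ∀ x : ℝ, volume.real (Metric.closedBall x (16 / (n : ℝ) ^ 2))
        = 2 * (16 / (n : ℝ) ^ 2) := fun x => Real.volume_real_closedBall (by positivity)
    simp only [hv, Finset.sum_const, nsmul_eq_mul]
    apply le_of_eq; ring
  have hfin : volume ((⋃ d ∈ Dsmall, ⋃ p ∈ P d,
      Metric.closedBall ((p : ℝ) / d) (1 / (((n : ℝ) + 1) * d))) ∪
      ⋃ x ∈ X, Metric.closedBall x (16 / (n : ℝ) ^ 2)) ≠ ⊤ := by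
    refine (IsCompact.measure_lt_top ?_).ne
    exact (Dsmall.isCompact_biUnion fun d _ => (P d).isCompact_biUnion fun p _ =>
      isCompact_closedBall _ _).union (X.isCompact_biUnion fun x _ => isCompact_closedBall _ _)
  have hvol := (measureReal_mono hcover hfin).trans (measureReal_union_le _ _)
  rw [Real.volume_real_Icc_of_le (by linarith)] at hvol
  have hfinal : L / 4 ≤ X.card * (32 / (n : ℝ) ^ 2) := by linarith
  rw [mul_div_assoc', le_div_iff₀ (by positivity)] at hfinal
  linarith

/-! ### The step of the nested construction -/

/-- An interval `[a, b]` is good for the sets `U i` with sizes `r i` if every `U i` meeting it has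
size at most its length, and the sets meeting it have `s`-dimensional content at most
`(b - a) ^ s / 1024`. The content bound is imposed on finite subfamilies, which avoids any
summability assumption. -/
def IsGood (U : ℕ → Set ℝ) (r : ℕ → ℝ) (s a b : ℝ) : Prop :=
  a < b ∧ (∀ i, (U i ∩ Icc a b).Nonempty → r i ≤ b - a) ∧
    ∀ S : Finset ℕ, (∀ i ∈ S, (U i ∩ Icc a b).Nonempty) →
      ∑ i ∈ S, r i ^ s ≤ (b - a) ^ s / 1024

/-- The charge which a set of size `t` imposes on an interval of length `l` that it meets, normalized
so that an interval with total charge less than `1` is good. -/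
noncomputable def weight (s l t : ℝ) : ℝ := if t ≤ l then 1024 * t ^ s / l ^ s else 1

/-- An interval on which every finite family of sets meeting it has total charge less than `1` is
good (stated contrapositively). -/
lemma exists_weight_of_not_isGood {U : ℕ → Set ℝ} {r : ℕ → ℝ} {s a b : ℝ} (hab : a < b)
    (h : ¬ IsGood U r s a b) :
    ∃ S : Finset ℕ, (∀ i ∈ S, (U i ∩ Icc a b).Nonempty) ∧
      1 ≤ ∑ i ∈ S, weight s (b - a) (r i) := by
  by_cases hbig : ∃ i, (U i ∩ Icc a b).Nonempty ∧ b - a < r i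
  · obtain ⟨i, hi, hr⟩ := hbig
    exact ⟨{i}, by simpa using hi, by simp [weight, not_le.2 hr]⟩
  · push Not at hbig
    have h' : ∃ S : Finset ℕ, (∀ i ∈ S, (U i ∩ Icc a b).Nonempty) ∧
        (b - a) ^ s / 1024 < ∑ i ∈ S, r i ^ s := by
      by_contra hcon
      push Not at hcon
      exact h ⟨hab, hbig, hcon⟩
    obtain ⟨S, hS, hlt⟩ := h'
    refine ⟨S, hS, ?_⟩
    have hpos : 0 < (b - a) ^ s := Real.rpow_pos_of_pos (sub_pos.2 hab) s
    have : ∑ i ∈ S, weight s (b - a) (r i) = 1024 / (b - a) ^ s * ∑ i ∈ S, r i ^ s := by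
      rw [Finset.mul_sum]
      refine Finset.sum_congr rfl fun i hi => ?_
      rw [weight, if_pos (hbig i (hS i hi))]
      ring
    rw [this, div_mul_eq_mul_div, le_div_iff₀ hpos]
    linarith

/-- The charge of one set, multiplied by the number `(t + l) * M + 1` which bounds how many intervals
of length `l`, with centres `1 / M`-separated, a set of size `t` can meet, is controlled by `t ^ s`. -/
lemma weight_mul_le {s l t L M : ℝ} (hl : 0 < l) (hs0 : 0 < s) (hs : s ≤ 1) (ht : 0 < t)
    (htL : t ≤ L) (hM : 0 ≤ M) (hlM : l * M ≤ 1) :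
    weight s l t * ((t + l) * M + 1) ≤ (3072 / l ^ s + 2 * M * L ^ (1 - s)) * t ^ s := by
  have hL : 0 < L := ht.trans_le htL
  have hls := Real.rpow_pos_of_pos hl s
  have hts := Real.rpow_pos_of_pos ht s
  have hLs := Real.rpow_pos_of_pos hL (1 - s)
  unfold weight
  split_ifs with h
  · have h3 : (t + l) * M + 1 ≤ 3 := by nlinarith
    calc 1024 * t ^ s / l ^ s * ((t + l) * M + 1) ≤ 1024 * t ^ s / l ^ s * 3 := by gcongr
      _ = 3072 / l ^ s * t ^ s := by ring
      _ ≤ _ := by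
        gcongr
        linarith [show 0 ≤ 2 * M * L ^ (1 - s) by positivity]
  · push Not at h
    have h1 : 1 ≤ 3072 / l ^ s * t ^ s := by
      have : l ^ s ≤ t ^ s := Real.rpow_le_rpow hl.le h.le hs0.le
      rw [div_mul_eq_mul_div, le_div_iff₀ hls]
      linarith
    have h2 : t ≤ L ^ (1 - s) * t ^ s := by
      calc t = t ^ (1 - s) * t ^ s := by rw [← Real.rpow_add ht]; simp
        _ ≤ _ := by
          gcongr
    have h4 : (t + l) * M ≤ 2 * t * M := by nlinarith
    have h5 : t * M ≤ (L ^ (1 - s) * t ^ s) * M := by gcongr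
    nlinarith

lemma nint_lt_of_abs_sub_lt {v : ℝ} {q : ℕ} {p : ℤ} {ξ : ℝ} (hq : 0 < q)
    (h : |ξ - (p : ℝ) / q| < (q : ℝ) ^ (-(v + 1))) : nint ((q : ℝ) * ξ) < (q : ℝ) ^ (-v) := by
  have hq' : (0 : ℝ) < q := by exact_mod_cast hq
  calc nint ((q : ℝ) * ξ) ≤ |(q : ℝ) * ξ - p| := round_le _ _
    _ = q * |ξ - (p : ℝ) / q| := by
      rw [← abs_of_pos hq', ← abs_mul, abs_of_pos hq']; congr 1; field_simp
    _ < q * (q : ℝ) ^ (-(v + 1)) := by gcongr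
    _ = (q : ℝ) ^ (-v) := by
      nth_rw 1 [← Real.rpow_one (q : ℝ)]
      rw [← Real.rpow_add hq']; congr 1; ring

/-- Inside a good interval there are arbitrarily short good intervals all of whose points are
approximated within `q ^ (-v)` by a single, arbitrarily large denominator `q`. -/
lemma IsGood.exists_next {U : ℕ → Set ℝ} {r : ℕ → ℝ} {s v a b : ℝ} (hv : 1 < v) (hs0 : 0 < s)
    (hs : s * (v + 1) < 2) (hr : ∀ i, 0 < r i)
    (hU : ∀ i, ∀ x ∈ U i, ∀ y ∈ U i, |x - y| ≤ r i) (hg : IsGood U r s a b) (m : ℕ) :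
    ∃ a' b', IsGood U r s a' b' ∧ Icc a' b' ⊆ Icc a b ∧ b' - a' ≤ 1 / ((m : ℝ) + 1) ∧
      ∃ q : ℕ, m < q ∧ ∀ ξ ∈ Icc a' b', nint ((q : ℝ) * ξ) < (q : ℝ) ^ (-v) := by
  obtain ⟨hab, hgr, hgS⟩ := hg
  set L := b - a with hL
  have hLpos : 0 < L := sub_pos.2 hab
  have hs1 : s ≤ 1 := by nlinarith
  have e1 := eventually_exists_rationals (show a + L / 4 < b - L / 4 by linarith)
  have e2 : ∀ᶠ n : ℕ in atTop, (n : ℝ) ^ (-(v + 1)) < min L (1 / ((m : ℝ) + 1)) / 4 :=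
    ((tendsto_rpow_neg_atTop (by linarith : 0 < v + 1)).comp
      tendsto_natCast_atTop_atTop).eventually_lt_const (by positivity)
  have e3 : ∀ᶠ n : ℕ in atTop, (n : ℝ) ^ (-(2 - s * (v + 1))) < L / (3 * 512 * L ^ s) :=
    ((tendsto_rpow_neg_atTop (by linarith : 0 < 2 - s * (v + 1))).comp
      tendsto_natCast_atTop_atTop).eventually_lt_const (by positivity)
  obtain ⟨n, ⟨X, hX, hcard⟩, h2, h3, hn⟩ :=
    (e1.and (e2.and (e3.and (eventually_ge_atTop (16 * m + 16))))).exists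
  have hn1 : (1 : ℝ) ≤ n := by exact_mod_cast (by omega : 1 ≤ n)
  have hn0 : (0 : ℝ) < n := by linarith
  set l : ℝ := (n : ℝ) ^ (-(v + 1)) with hl
  have hlpos : 0 < l := Real.rpow_pos_of_pos hn0 _
  have hlL : l < L / 4 := h2.trans_le (by gcongr; exact min_le_left _ _)
  have hlm : l ≤ 1 / ((m : ℝ) + 1) := by
    have := min_le_right L (1 / ((m : ℝ) + 1))
    have : 0 < 1 / ((m : ℝ) + 1) := by positivity
    linarith
  have hln : l * (n : ℝ) ^ 2 ≤ 1 := by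
    rw [hl, ← Real.rpow_natCast, ← Real.rpow_add hn0]
    apply Real.rpow_le_one_of_one_le_of_nonpos hn1
    push_cast; linarith
  have hsub : ∀ x ∈ X, Icc (x - l / 2) (x + l / 2) ⊆ Icc a b := by
    intro x hx
    have := (hX x hx).1
    apply Icc_subset_Icc <;> linarith [this.1, this.2]
  have key : ∃ x ∈ X, IsGood U r s (x - l / 2) (x + l / 2) := by
    by_contra hcon
    push Not at hcon
    have hch : ∀ x, ∃ S : Finset ℕ, x ∈ X →
        (∀ i ∈ S, (U i ∩ Icc (x - l / 2) (x + l / 2)).Nonempty) ∧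
        1 ≤ ∑ i ∈ S, weight s l (r i) := by
      intro x
      by_cases hx : x ∈ X
      · obtain ⟨S, h1, h2⟩ := exists_weight_of_not_isGood (by linarith) (hcon x hx)
        rw [show x + l / 2 - (x - l / 2) = l by ring] at h2
        exact ⟨S, fun _ => ⟨h1, h2⟩⟩
      · exact ⟨∅, fun h => absurd h hx⟩
    choose S hS using hch
    -- Each centre `x` carries a finite family `S x` with charge at least `1`; summing over `x` and
    -- exchanging the sums bounds the number of centres.
    let T := X.biUnion S
    have hT : ∀ i ∈ T, (U i ∩ Icc a b).Nonempty := by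
      intro i hi
      obtain ⟨x, hx, hi⟩ := Finset.mem_biUnion.1 hi
      exact ((hS x hx).1 i hi).mono (inter_subset_inter_right _ (hsub x hx))
    have hhits : ∀ i, ((X.filter fun x => i ∈ S x).card : ℝ) ≤
        (r i + l) * (n : ℝ) ^ 2 + 1 := by
      intro i
      have := card_le_of_separated (X.filter fun x => i ∈ S x) (η := 1 / (n : ℝ) ^ 2)
        (D := r i + l) (by positivity) (by linarith [hr i]) ?_ ?_
      · simpa using this
      · intro x hx y hy hxy
        obtain ⟨-, d, p, hd, hdn, rfl⟩ := hX x (Finset.mem_filter.1 hx).1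
        obtain ⟨-, e, q, he, hen, rfl⟩ := hX y (Finset.mem_filter.1 hy).1
        exact one_div_sq_le_abs_sub (by omega) (by omega) hdn hen hxy
      · intro x hx y hy
        rw [Finset.mem_filter] at hx hy
        obtain ⟨x', hx'U, hx'⟩ := (hS x hx.1).1 i hx.2
        obtain ⟨y', hy'U, hy'⟩ := (hS y hy.1).1 i hy.2
        have := abs_le.1 (hU i x' hx'U y' hy'U)
        rw [abs_le]
        constructor <;> linarith [this.1, this.2, hx'.1, hx'.2, hy'.1, hy'.2]
    have hw : ∀ i, 0 ≤ weight s l (r i) := by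
      intro i
      have := hr i
      unfold weight; split_ifs <;> positivity
    have hmain : (X.card : ℝ) ≤
        (3072 / l ^ s + 2 * (n : ℝ) ^ 2 * L ^ (1 - s)) * (L ^ s / 1024) := by
      calc (X.card : ℝ) = ∑ x ∈ X, (1 : ℝ) := by simp
        _ ≤ ∑ x ∈ X, ∑ i ∈ S x, weight s l (r i) :=
          Finset.sum_le_sum fun x hx => (hS x hx).2
        _ = ∑ i ∈ T, ∑ x ∈ X.filter (fun x => i ∈ S x), weight s l (r i) := by
          apply Finset.sum_comm'
          intro x i
          simp only [T, Finset.mem_biUnion, Finset.mem_filter]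
          constructor
          · rintro ⟨hx, hi⟩; exact ⟨⟨hx, hi⟩, x, hx, hi⟩
          · rintro ⟨⟨hx, hi⟩, -⟩; exact ⟨hx, hi⟩
        _ ≤ ∑ i ∈ T, (3072 / l ^ s + 2 * (n : ℝ) ^ 2 * L ^ (1 - s)) * r i ^ s := by
          refine Finset.sum_le_sum fun i hi => ?_
          rw [Finset.sum_const, nsmul_eq_mul, mul_comm]
          exact (mul_le_mul_of_nonneg_left (hhits i) (hw i)).trans
            (weight_mul_le hlpos hs0 hs1 (hr i) (hgr i (hT i hi)) (by positivity) hln)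
        _ ≤ _ := by
          rw [← Finset.mul_sum]
          gcongr
          exact hgS T hT
    have hLs : L ^ (1 - s) * L ^ s = L := by rw [← Real.rpow_add hLpos]; simp
    have hls : 1 / l ^ s = (n : ℝ) ^ 2 * (n : ℝ) ^ (-(2 - s * (v + 1))) := by
      rw [hl, ← Real.rpow_mul hn0.le, one_div, ← Real.rpow_neg hn0.le, ← Real.rpow_natCast,
        ← Real.rpow_add hn0]
      congr 1; push_cast; ring
    have hLsp := Real.rpow_pos_of_pos hLpos s
    rw [lt_div_iff₀ (by positivity)] at h3
    have : (3072 / l ^ s + 2 * (n : ℝ) ^ 2 * L ^ (1 - s)) * (L ^ s / 1024) =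
        3 * L ^ s * (1 / l ^ s) + (n : ℝ) ^ 2 * (L ^ (1 - s) * L ^ s) / 512 := by ring
    rw [this, hLs, hls] at hmain
    have hn2 : 0 < (n : ℝ) ^ 2 := by positivity
    nlinarith
  obtain ⟨x, hx, hgood⟩ := key
  refine ⟨_, _, hgood, hsub x hx, by linarith, ?_⟩
  obtain ⟨-, d, p, hd, hdn, rfl⟩ := hX x hx
  have hd0 : 0 < d := by omega
  refine ⟨d, by omega, fun ξ hξ => nint_lt_of_abs_sub_lt (p := p) hd0 ?_⟩
  have h1 : |ξ - (p : ℝ) / d| ≤ l / 2 := by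
    rw [abs_le]; constructor <;> linarith [hξ.1, hξ.2]
  have h2 : l ≤ (d : ℝ) ^ (-(v + 1)) :=
    Real.rpow_le_rpow_of_nonpos (by exact_mod_cast hd0) (by exact_mod_cast hdn) (by linarith)
  linarith

/-! ### The lower bound -/

/-- The set of real numbers `ξ` with `‖qξ‖ < q ^ (-v)` for infinitely many positive integers `q`. -/
def wellApprox (v : ℝ) : Set ℝ :=
  {ξ : ℝ | {q : ℕ | 0 < q ∧ nint ((q : ℝ) * ξ) < (q : ℝ) ^ (-v)}.Infinite}

/-- A sequence of sets of small total `s`-dimensional content cannot cover `wellApprox v`: a point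
in a nested sequence of good intervals with lengths tending to `0` lies in none of the sets. -/
lemma exists_mem_not_mem {U : ℕ → Set ℝ} {r : ℕ → ℝ} {s v : ℝ} (hv : 1 < v) (hs0 : 0 < s)
    (hs : s * (v + 1) < 2) (hr : ∀ i, 0 < r i)
    (hU : ∀ i, ∀ x ∈ U i, ∀ y ∈ U i, |x - y| ≤ r i)
    (hsum : ∀ S : Finset ℕ, ∑ i ∈ S, r i ^ s ≤ 1 / 1024) :
    ∃ ξ ∈ wellApprox v, ∀ i, ξ ∉ U i := by
  have h0 : IsGood U r s 0 1 := by
    refine ⟨one_pos, fun i _ => ?_, fun S _ => by simpa using hsum S⟩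
    by_contra! h
    have h1 := hsum {i}
    have h2 := Real.one_le_rpow (x := r i) (by linarith) hs0.le
    simp at h1
    linarith
  choose! A B hgood hsub hlen q hq happ using
    fun (I : ℝ × ℝ) (m : ℕ) (h : IsGood U r s I.1 I.2) => h.exists_next hv hs0 hs hr hU m
  let I : ℕ → ℝ × ℝ := fun k => Nat.rec (0, 1) (fun m J => (A J m, B J m)) k
  have hI : ∀ k, IsGood U r s (I k).1 (I k).2 := by
    intro k
    induction k with
    | zero => exact h0
    | succ k ih => exact hgood (I k) k ih
  obtain ⟨ξ, hξ⟩ := IsCompact.nonempty_iInter_of_sequence_nonempty_isCompact_isClosed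
    (fun k => Icc (I k).1 (I k).2) (fun k => hsub (I k) k (hI k))
    (fun k => nonempty_Icc.2 (hI k).1.le) isCompact_Icc (fun k => isClosed_Icc)
  rw [mem_iInter] at hξ
  refine ⟨ξ, ?_, fun i hi => ?_⟩
  · refine infinite_of_forall_exists_gt fun k => ?_
    have := hq (I k) k (hI k)
    exact ⟨q (I k) k, ⟨by omega, happ (I k) k (hI k) ξ (hξ (k + 1))⟩, this⟩
  · obtain ⟨k, hk⟩ := exists_nat_one_div_lt (hr i)
    have h1 := (hI (k + 1)).2.1 i ⟨ξ, hi, hξ (k + 1)⟩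
    have h2 : (I (k + 1)).2 - (I (k + 1)).1 ≤ _ := hlen (I k) k (hI k)
    linarith

lemma hausdorffMeasure_wellApprox_ne_zero {s v : ℝ} (hv : 1 < v) (hs0 : 0 < s)
    (hs : s * (v + 1) < 2) : μH[s] (wellApprox v) ≠ 0 := by
  intro hzero
  have hlt : μH[s] (wellApprox v) < ENNReal.ofReal (1 / 2048) := by
    rw [hzero]; simp
  rw [Measure.hausdorffMeasure_apply] at hlt
  have hlt1 := (le_iSup₂ (f := fun (r : ENNReal) (_ : 0 < r) =>
    ⨅ (t : ℕ → Set ℝ) (_ : wellApprox v ⊆ ⋃ n, t n) (_ : ∀ n, Metric.ediam (t n) ≤ r),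
      ∑' n, ⨆ _ : (t n).Nonempty, Metric.ediam (t n) ^ s) 1 one_pos).trans_lt hlt
  simp only [iInf_lt_iff] at hlt1
  obtain ⟨U, hcov, -, hUsum⟩ := hlt1
  set f : ℕ → ENNReal := fun n => ⨆ _ : (U n).Nonempty, Metric.ediam (U n) ^ s with hf
  have hftop : ∀ n, f n ≠ ⊤ := ENNReal.ne_top_of_tsum_ne_top (hUsum.trans ENNReal.ofReal_lt_top).ne
  -- The diameters may vanish, so a summable positive amount is added to the contents `f n`.
  let w : ℕ → ℝ := fun n => (f n).toReal + 1 / 4096 / 2 ^ n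
  have hw : ∀ n, 0 < w n := fun n => by positivity
  have hs0' : s ≠ 0 := hs0.ne'
  have hU : ∀ i, ∀ x ∈ U i, ∀ y ∈ U i, |x - y| ≤ w i ^ s⁻¹ := by
    intro i x hx y hy
    have h1 : ENNReal.ofReal |x - y| ^ s ≤ f i := by
      have : f i = Metric.ediam (U i) ^ s := by simp only [hf]; exact ciSup_pos ⟨x, hx⟩
      rw [this]
      gcongr
      rw [← Real.dist_eq, ← edist_dist]
      exact Metric.edist_le_ediam_of_mem hx hy
    rw [ENNReal.ofReal_rpow_of_nonneg (abs_nonneg _) hs0.le,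
      ENNReal.ofReal_le_iff_le_toReal (hftop i)] at h1
    rw [Real.le_rpow_inv_iff_of_pos (abs_nonneg _) (hw i).le hs0]
    have : (0 : ℝ) < 1 / 4096 / 2 ^ i := by positivity
    simp only [w]; linarith
  have hsum : ∀ S : Finset ℕ, ∑ i ∈ S, (w i ^ s⁻¹) ^ s ≤ 1 / 1024 := by
    intro S
    have h1 : ∀ i, (w i ^ s⁻¹) ^ s = w i := fun i => Real.rpow_inv_rpow (hw i).le hs0'
    simp only [h1, w, Finset.sum_add_distrib]
    have h2 : ∑ i ∈ S, (f i).toReal ≤ 1 / 2048 := by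
      rw [← ENNReal.toReal_sum fun i _ => hftop i]
      exact ENNReal.toReal_le_of_le_ofReal (by norm_num) ((ENNReal.sum_le_tsum S).trans hUsum.le)
    have h3 : ∑ i ∈ S, (1 / 4096 / 2 ^ i : ℝ) ≤ 1 / 2048 := by
      have hh : HasSum (fun i : ℕ => (1 / 4096 / 2 ^ i : ℝ)) (1 / 2048) := by
        have := hasSum_geometric_two' (1 / 2048 : ℝ)
        norm_num at this ⊢
        exact this
      exact sum_le_hasSum S (fun i _ => by positivity) hh
    linarith
  obtain ⟨ξ, hξ, hnot⟩ := exists_mem_not_mem hv hs0 hs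
    (fun n => Real.rpow_pos_of_pos (hw n) s⁻¹) hU hsum
  obtain ⟨i, hi⟩ := mem_iUnion.1 (hcov hξ)
  exact hnot i hi

/-! ### The upper bound -/

lemma hausdorffMeasure_wellApprox_inter_Icc {s v : ℝ} (hv : 1 < v) (hs : 2 < s * (v + 1)) (z : ℤ) :
    μH[s] (wellApprox v ∩ Icc (z : ℝ) (z + 1)) = 0 := by
  have hs0 : 0 < s := by
    by_contra! h
    nlinarith
  -- For fixed `M`, the index `⟨k, j⟩` stands for the denominator `q = k + M` and the numerator
  -- `p = z * q + j - 1`, which runs over `[z * q - 1, (z + 1) * q + 1]`.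
  let t : ∀ M : ℕ, (Σ k : ℕ, Fin (k + M + 3)) → Set ℝ := fun M i =>
    Metric.closedBall (((z * ((i.1 + M : ℕ) : ℤ) + (i.2 : ℕ) - 1 : ℤ) : ℝ) / ((i.1 + M : ℕ) : ℝ))
      (((i.1 + M : ℕ) : ℝ) ^ (-(v + 1)))
  let ρ : ℕ → ENNReal := fun q => ENNReal.ofReal (2 * (q : ℝ) ^ (-(v + 1)))
  have hdiam : ∀ M i, Metric.ediam (t M i) ≤ ρ (i.1 + M) := by
    intro M i
    simp only [t, ρ, Real.closedBall_eq_Icc, Real.ediam_Icc]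
    apply le_of_eq; congr 1; ring
  let g : ℕ → ENNReal := fun q => ((q + 3 : ℕ) : ENNReal) * ρ q ^ s
  have hgsum : ∑' q, g q ≠ ⊤ := by
    have hle : ∀ q : ℕ, g q ≤ ENNReal.ofReal (4 * 2 ^ s * (q : ℝ) ^ (1 - s * (v + 1))) := by
      intro q
      rcases Nat.eq_zero_or_pos q with rfl | hq
      · simp [g, ρ, Real.zero_rpow (by linarith : -1 + -v ≠ 0), hs0]
      have hq' : (1 : ℝ) ≤ q := by exact_mod_cast hq
      have hq0 : (0 : ℝ) < q := by linarith
      simp only [g, ρ]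
      rw [ENNReal.ofReal_rpow_of_nonneg (by positivity) hs0.le, ← ENNReal.ofReal_natCast,
        ← ENNReal.ofReal_mul (by positivity)]
      apply ENNReal.ofReal_le_ofReal
      rw [Real.mul_rpow (by positivity) (by positivity), ← Real.rpow_mul hq0.le,
        show 1 - s * (v + 1) = 1 + -(v + 1) * s by ring, Real.rpow_add hq0, Real.rpow_one]
      push_cast
      have : 0 ≤ (2 : ℝ) ^ s * (q : ℝ) ^ (-(v + 1) * s) := by positivity
      nlinarith
    refine ne_top_of_le_ne_top ?_ (ENNReal.tsum_le_tsum hle)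
    refine Summable.tsum_ofReal_ne_top (Summable.mul_left _ ?_)
    exact Real.summable_nat_rpow.2 (by linarith)
  have hρ0 : Tendsto ρ atTop (𝓝 0) := by
    have h1 : Tendsto (fun q : ℕ => 2 * (q : ℝ) ^ (-(v + 1))) atTop (𝓝 0) := by
      simpa using ((tendsto_rpow_neg_atTop (by linarith : 0 < v + 1)).comp
        tendsto_natCast_atTop_atTop).const_mul (2 : ℝ)
    rw [← ENNReal.ofReal_zero]
    exact ENNReal.tendsto_ofReal h1
  let R : ℕ → ENNReal := fun M => ⨆ k : ℕ, ρ (k + M)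
  have hR : Tendsto R atTop (𝓝 0) := by
    have := hρ0.limsup_eq
    rw [Filter.limsup_eq_iInf_iSup_of_nat'] at this
    rw [← this]
    refine tendsto_atTop_iInf fun M N hMN => iSup_le fun k => ?_
    refine le_iSup_of_le (k + N - M) ?_
    rw [show k + N - M + M = k + N by omega]
  have hbound := Measure.hausdorffMeasure_le_liminf_tsum s (wellApprox v ∩ Icc (z : ℝ) (z + 1))
    R hR t (Eventually.of_forall fun M i => (hdiam M i).trans
      (le_iSup (fun k => ρ (k + M)) i.1)) ?_
  · refine le_antisymm (hbound.trans ?_) zero_le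
    have hlim := ENNReal.tendsto_sum_nat_add g hgsum
    rw [← hlim.liminf_eq]
    refine liminf_le_liminf (Eventually.of_forall fun M => ?_)
    rw [ENNReal.tsum_sigma']
    refine ENNReal.tsum_le_tsum fun k => ?_
    calc ∑' j : Fin (k + M + 3), Metric.ediam (t M ⟨k, j⟩) ^ s
        ≤ ∑' j : Fin (k + M + 3), ρ (k + M) ^ s :=
          ENNReal.tsum_le_tsum fun j => by
            gcongr
            exact hdiam M ⟨k, j⟩
      _ = g (k + M) := by simp [g]
  · refine Eventually.of_forall fun M ξ hξ => ?_
    obtain ⟨q, ⟨hq0, hq⟩, hMq⟩ := hξ.1.exists_gt M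
    have hq1 : (1 : ℝ) ≤ q := by exact_mod_cast hq0
    have hqpos : (0 : ℝ) < q := by linarith
    set p := round ((q : ℝ) * ξ) with hp
    rw [nint, ← hp] at hq
    have hlt1 : (q : ℝ) ^ (-v) ≤ 1 := Real.rpow_le_one_of_one_le_of_nonpos hq1 (by linarith)
    have habs := abs_lt.1 (hq.trans_le hlt1)
    have hz1 : (z : ℝ) * q ≤ q * ξ := by nlinarith [hξ.2.1]
    have hz2 : q * ξ ≤ (z + 1 : ℝ) * q := by nlinarith [hξ.2.2]
    have hp1 : z * q - 1 < p := by
      have : ((z * q - 1 : ℤ) : ℝ) < p := by push_cast; linarith [habs.2]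
      exact_mod_cast this
    have hp2 : p < (z + 1) * q + 1 := by
      have : (p : ℝ) < (((z + 1) * q + 1 : ℤ) : ℝ) := by push_cast; linarith [habs.1]
      exact_mod_cast this
    rw [add_mul, one_mul] at hp2
    have hqM : q - M + M = q := by omega
    refine mem_iUnion.2 ⟨⟨q - M, ⟨(p - z * q + 1).toNat, by omega⟩⟩, ?_⟩
    simp only [t, hqM]
    rw [Int.toNat_of_nonneg (by omega), Metric.mem_closedBall, Real.dist_eq,
      show z * (q : ℤ) + (p - z * q + 1) - 1 = p by ring,
      show ξ - (p : ℝ) / q = (q * ξ - p) / q by field_simp, abs_div, abs_of_pos hqpos,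
      div_le_iff₀ hqpos]
    refine hq.le.trans_eq ?_
    nth_rw 3 [← Real.rpow_one (q : ℝ)]
    rw [← Real.rpow_add hqpos]; congr 1; ring

/-- The Jarník–Besicovitch theorem. -/
theorem jarnik_besicovitch (v : ℝ) (hv : 1 < v) :
    dimH {ξ : ℝ | {q : ℕ | 0 < q ∧ nint ((q : ℝ) * ξ) < (q : ℝ) ^ (-v)}.Infinite} =
      ENNReal.ofReal (2 / (v + 1)) := by
  change dimH (wellApprox v) = _
  have hv1 : 0 < v + 1 := by linarith
  apply le_antisymm
  · have hcov : wellApprox v = ⋃ z : ℤ, wellApprox v ∩ Icc (z : ℝ) (z + 1) := by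
      rw [← inter_iUnion, iUnion_Icc_intCast, inter_univ]
    rw [hcov, dimH_iUnion]
    refine iSup_le fun z => dimH_le fun d hd => ?_
    by_contra! hlt
    have hlt' : 2 / (v + 1) < (d : ℝ) := by
      rw [← ENNReal.ofReal_coe_nnreal] at hlt
      exact (ENNReal.ofReal_lt_ofReal_iff'.1 hlt).1
    rw [div_lt_iff₀ hv1] at hlt'
    rw [hausdorffMeasure_wellApprox_inter_Icc hv hlt'] at hd
    exact ENNReal.zero_ne_top hd
  · refine le_of_forall_lt fun c hc => ?_
    obtain ⟨d, hcd, hd⟩ := ENNReal.lt_iff_exists_nnreal_btwn.1 hc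
    refine hcd.trans_le (le_dimH_of_hausdorffMeasure_ne_zero ?_)
    have hd0 : (0 : ℝ) < d := by
      have : (0 : ENNReal) < d := zero_le.trans_lt hcd
      exact_mod_cast this
    have hd' : (d : ℝ) < 2 / (v + 1) := by
      rw [← ENNReal.ofReal_coe_nnreal] at hd
      exact (ENNReal.ofReal_lt_ofReal_iff'.1 hd).1
    exact hausdorffMeasure_wellApprox_ne_zero hv hd0 ((lt_div_iff₀ hv1).1 hd')
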